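/- Let F be a field and let A, B be finite subsets of F∖{0} with |A| ≥ 3 and B nonempty. Then there exists a subset A₁ ⊆ A with |A₁| ≥ c·|A| for an absolute constant c > 0, such that E*₄/₃(A₁') ≥ c'·E*₄/₃(A₁) for an absolute constant c' > 0, where A₁' is the popular subset of A₁ defined relative to B (that is, with P₁ = {x ∈ A₁B : r_{A₁B}(x) ≥ |A₁||B|/(log|A₁|·|A₁B|)}, one sets A₁' = {a ∈ A₁ : #{b ∈ B : ab ∈ P₁} ≥ (2/3)|B|}). -/

import Mathlib

/-!
Write `A'` for the popular subset of `A` and `E` for the 4/3-energy. An unpopular product has fewer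
than `|A||B| / (log|A| |AB|)` representations, so at most `|A||B| / log|A|` pairs `(a, b)` have an
unpopular product. Each `a ∈ A \ A'` contributes at least `|B|/3` of them, hence
`|A \ A'| ≤ 3|A| / log|A|` (`card_sub_popularSub_le`).

For large `n = |A|`, iterate `A ↦ A'` about `log(n/2)/6` times; all the sets obtained keep at least
`n/2` elements. If `E(A₁') < c' E(A₁)` held at every step, the energy would drop by a large power of
`n`. This is impossible, since `|X|² ≤ E(X) ≤ |X|³` for every finite set `X` of nonzero elements.

For bounded `n`, take a singleton for `A₁`. Then `log|A₁| = 0`, and as division by zero gives zero,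
the popularity threshold is `0` and `A₁' = A₁`.
-/

open Finset Pointwise
open scoped Classical

/-- The representation function `r_{XY}(t) = #{(x,y) ∈ X×Y : xy = t}`. -/
def prodRep {F : Type*} [Field F] [DecidableEq F] (X Y : Finset F) (t : F) : ℕ :=
  ((X ×ˢ Y).filter fun p => p.1 * p.2 = t).card

/-- The representation function `r_{X/X}(t) = #{(x,x') ∈ X×X : x/x' = t}`. -/
def divRep {F : Type*} [Field F] [DecidableEq F] (X : Finset F) (t : F) : ℕ :=
  ((X ×ˢ X).filter fun p => p.1 / p.2 = t).card

/-- The 4/3-energy `E*₄/₃(X) = Σ_t r_{X/X}(t)^{4/3}`. -/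
noncomputable def energy43 {F : Type*} [Field F] [DecidableEq F] (X : Finset F) : ℝ :=
  ∑ t ∈ X / X, (divRep X t : ℝ) ^ ((4 : ℝ) / 3)

/-- The popular product set `P = {x ∈ AB : r_{AB}(x) ≥ |A||B|/(log|A|·|AB|)}`. -/
noncomputable def popularP {F : Type*} [Field F] [DecidableEq F] (A B : Finset F) : Finset F :=
  (A * B).filter fun x =>
    (A.card : ℝ) * B.card / (Real.log A.card * (A * B).card) ≤ (prodRep A B x : ℝ)

/-- The popular subset `A' = {a ∈ A : #{b ∈ B : ab ∈ P} ≥ (2/3)|B|}`. -/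
noncomputable def popularSub {F : Type*} [Field F] [DecidableEq F] (A B : Finset F) : Finset F :=
  A.filter fun a =>
    (2 : ℝ) / 3 * B.card ≤ ((B.filter fun b => a * b ∈ popularP A B).card : ℝ)

section
variable {F : Type*} [Field F] [DecidableEq F]

lemma sum_divRep (X : Finset F) : ∑ t ∈ X / X, divRep X t = X.card ^ 2 := by
  unfold divRep
  rw [← card_eq_sum_card_fiberwise, card_product, sq]
  intro p hp
  have hp' := mem_product.1 hp
  exact div_mem_div hp'.1 hp'.2

/-- Since `y ≠ 0`, the relation `x / y = t` determines `x` from `y`. -/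
lemma divRep_le_card {X : Finset F} (h0 : (0 : F) ∉ X) (t : F) : divRep X t ≤ X.card := by
  unfold divRep
  refine card_le_card_of_injOn Prod.snd (fun p hp => ?_) ?_
  · exact (mem_product.1 (mem_filter.1 hp).1).2
  · rintro ⟨x, y⟩ hp ⟨x', y'⟩ hq (rfl : y = y')
    have hp' := mem_filter.1 hp
    have hq' := mem_filter.1 hq
    have hy : y ≠ 0 := fun h => h0 (h ▸ (mem_product.1 hp'.1).2)
    have h := hp'.2.trans hq'.2.symm
    simp only [div_left_inj' hy] at h
    rw [h]

lemma sq_card_le_energy43 (X : Finset F) : (X.card : ℝ) ^ 2 ≤ energy43 X := by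
  have h : ((X.card ^ 2 : ℕ) : ℝ) = ∑ t ∈ X / X, (divRep X t : ℝ) := by
    rw [← sum_divRep]; push_cast; rfl
  push_cast at h
  rw [h]
  refine sum_le_sum fun t _ => ?_
  rcases Nat.eq_zero_or_pos (divRep X t) with h | h
  · rw [h]; simp
  · exact Real.self_le_rpow_of_one_le (by exact_mod_cast h) (by norm_num)

lemma energy43_le_card_pow_three {X : Finset F} (h0 : (0 : F) ∉ X) :
    energy43 X ≤ (X.card : ℝ) ^ 3 := by
  have h : ((X.card ^ 2 : ℕ) : ℝ) = ∑ t ∈ X / X, (divRep X t : ℝ) := by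
    rw [← sum_divRep]; push_cast; rfl
  push_cast at h
  rw [pow_succ, h, sum_mul]
  refine sum_le_sum fun t _ => ?_
  have hr : (divRep X t : ℝ) ≤ X.card := by exact_mod_cast divRep_le_card h0 t
  rcases Nat.eq_zero_or_pos (divRep X t) with h | h
  · rw [h]; simp
  · have h1 : (1 : ℝ) ≤ divRep X t := by exact_mod_cast h
    calc (divRep X t : ℝ) ^ ((4 : ℝ) / 3) ≤ (divRep X t : ℝ) ^ (2 : ℝ) :=
          Real.rpow_le_rpow_of_exponent_le h1 (by norm_num)
      _ = (divRep X t : ℝ) * divRep X t := by rw [Real.rpow_two, sq]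
      _ ≤ _ := by gcongr

lemma popularSub_subset (A B : Finset F) : popularSub A B ⊆ A := filter_subset _ _

/-- The number of pairs with an unpopular product, counted by fibres over `a ∈ A` on the left and
bounded by fibres over the products. -/
lemma sum_unpopular_le {A B : Finset F} (hlog : 0 < Real.log A.card) :
    ∑ a ∈ A, ((B.filter fun b => a * b ∉ popularP A B).card : ℝ)
      ≤ (A.card : ℝ) * B.card / Real.log A.card := by
  set U := (A ×ˢ B).filter fun p => p.1 * p.2 ∉ popularP A B with hU
  have h1 : ∑ a ∈ A, (B.filter fun b => a * b ∉ popularP A B).card = U.card := by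
    rw [hU, card_filter, sum_product]
    simp only [card_filter]
  have h2 : U.card = ∑ x ∈ A * B, (U.filter fun p => p.1 * p.2 = x).card := by
    refine card_eq_sum_card_fiberwise fun p hp => ?_
    have hp' := mem_product.1 (mem_filter.1 hp).1
    exact mul_mem_mul hp'.1 hp'.2
  set T : ℝ := (A.card : ℝ) * B.card / (Real.log A.card * (A * B).card) with hT
  have hT0 : 0 ≤ T := by positivity
  have h3 : ∀ x ∈ A * B, ((U.filter fun p => p.1 * p.2 = x).card : ℝ) ≤ T := by
    intro x hx
    by_cases hxP : x ∈ popularP A B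
    · have : (U.filter fun p => p.1 * p.2 = x) = ∅ := by
        refine filter_eq_empty_iff.2 fun p hp hpx => (mem_filter.1 hp).2 ?_
        rw [hpx]; exact hxP
      rw [this]; simpa using hT0
    · have hlt : (prodRep A B x : ℝ) < T := by
        by_contra hcon
        exact hxP (mem_filter.2 ⟨hx, not_lt.1 hcon⟩)
      refine le_trans ?_ hlt.le
      unfold prodRep
      exact_mod_cast card_le_card (filter_subset_filter _ (filter_subset _ _))
  have h4 : ((A * B).card : ℝ) * T ≤ (A.card : ℝ) * B.card / Real.log A.card := by
    rcases Nat.eq_zero_or_pos (A * B).card with h | h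
    · rw [h]; simp; positivity
    · have : (0 : ℝ) < (A * B).card := by exact_mod_cast h
      rw [hT]; apply le_of_eq; field_simp
  calc _ = (U.card : ℝ) := by rw [← h1]; push_cast; rfl
    _ = ∑ x ∈ A * B, ((U.filter fun p => p.1 * p.2 = x).card : ℝ) := by rw [h2]; push_cast; rfl
    _ ≤ ∑ _x ∈ A * B, T := sum_le_sum h3
    _ = ((A * B).card : ℝ) * T := by rw [sum_const, nsmul_eq_mul]
    _ ≤ _ := h4

/-- Passing to the popular subset loses at most a proportion `3 / log|A|` of the elements. -/
lemma card_sub_popularSub_le {A B : Finset F} (hB : B.Nonempty) (hlog : 0 < Real.log A.card) :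
    (A.card : ℝ) - (popularSub A B).card ≤ 3 * A.card / Real.log A.card := by
  have hBpos : (0 : ℝ) < B.card := by exact_mod_cast hB.card_pos
  have hbad : ∀ a ∈ A \ popularSub A B,
      (B.card : ℝ) / 3 ≤ ((B.filter fun b => a * b ∉ popularP A B).card : ℝ) := by
    intro a ha
    obtain ⟨haA, hna⟩ := mem_sdiff.1 ha
    have hlt : ((B.filter fun b => a * b ∈ popularP A B).card : ℝ) < (2 : ℝ) / 3 * B.card := by
      by_contra hcon
      exact hna (mem_filter.2 ⟨haA, not_lt.1 hcon⟩)
    have hsum : ((B.filter fun b => a * b ∈ popularP A B).card : ℝ)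
        + (B.filter fun b => a * b ∉ popularP A B).card = B.card := by
      exact_mod_cast card_filter_add_card_filter_not (s := B) (fun b => a * b ∈ popularP A B)
    linarith
  have h1 : ((A \ popularSub A B).card : ℝ) * (B.card / 3)
      ≤ (A.card : ℝ) * B.card / Real.log A.card := by
    calc _ = ∑ _a ∈ A \ popularSub A B, (B.card : ℝ) / 3 := by rw [sum_const, nsmul_eq_mul]
      _ ≤ _ := sum_le_sum hbad
      _ ≤ ∑ a ∈ A, ((B.filter fun b => a * b ∉ popularP A B).card : ℝ) :=
          sum_le_sum_of_subset_of_nonneg sdiff_subset fun _ _ _ => by positivity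
      _ ≤ _ := sum_unpopular_le hlog
  have h2 : ((A \ popularSub A B).card : ℝ) = A.card - (popularSub A B).card := by
    rw [card_sdiff_of_subset (popularSub_subset A B),
      Nat.cast_sub (card_le_card (popularSub_subset A B))]
  rw [h2] at h1
  have h3 : (A.card : ℝ) * B.card / Real.log A.card
      = (3 * A.card / Real.log A.card) * (B.card / 3) := by ring
  rw [h3] at h1
  exact le_of_mul_le_mul_right h1 (by positivity)

/-- The threshold in `popularP {a} B` has `log 1 = 0` in its denominator, so it equals `0`. -/
lemma popularSub_singleton (a : F) (B : Finset F) : popularSub {a} B = {a} := by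
  have hP : ∀ b ∈ B, a * b ∈ popularP {a} B := by
    intro b hb
    refine mem_filter.2 ⟨mul_mem_mul (mem_singleton_self a) hb, ?_⟩
    simp
  refine filter_true_of_mem fun x hx => ?_
  rw [mem_singleton.1 hx, filter_true_of_mem hP]
  have : (0 : ℝ) ≤ B.card := by positivity
  linarith

/-- Suppose the energy drops by a factor `q` whenever a subset of `A` of size at least `|A|/2` is
replaced by its popular subset. The `i`-fold popular subset of `A` keeps at least
`|A| - 3i|A| / log(|A|/2)` elements, so up to `i ≤ log(|A|/2)/6` the drop can be repeated. -/
lemma exists_iterated_drop {A B : Finset F} (hB : B.Nonempty) {q : ℝ} (hq : 0 ≤ q)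
    (hA : 6 ≤ Real.log (A.card / 2))
    (hdrop : ∀ X ⊆ A, (A.card : ℝ) / 2 ≤ X.card → energy43 (popularSub X B) ≤ q * energy43 X)
    (i : ℕ) (hi : (i : ℝ) ≤ Real.log (A.card / 2) / 6) :
    ∃ X ⊆ A, (A.card : ℝ) - i * (3 * A.card / Real.log (A.card / 2)) ≤ X.card ∧
      energy43 X ≤ q ^ i * energy43 A := by
  set L := Real.log (A.card / 2) with hL
  have hLpos : 0 < L := by linarith
  have hn : (0 : ℝ) < A.card := by
    rcases Nat.eq_zero_or_pos A.card with h | h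
    · rw [hL, h] at hA; norm_num at hA
    · exact_mod_cast h
  induction i with
  | zero => exact ⟨A, Subset.refl A, by simp, by simp⟩
  | succ i ih =>
    push_cast at hi
    obtain ⟨X, hXA, hXc, hXE⟩ := ih (by linarith)
    have hhalf : (A.card : ℝ) / 2 ≤ X.card := by
      have : (i : ℝ) * (3 * A.card / L) ≤ L / 6 * (3 * A.card / L) := by
        gcongr; linarith
      have h2 : L / 6 * (3 * A.card / L) = (A.card : ℝ) / 2 := by field_simp; norm_num
      linarith
    have hlog : L ≤ Real.log X.card := Real.log_le_log (by positivity) hhalf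
    refine ⟨popularSub X B, (popularSub_subset X B).trans hXA, ?_, ?_⟩
    · have h1 := card_sub_popularSub_le (A := X) hB (hLpos.trans_le hlog)
      have h2 : 3 * (X.card : ℝ) / Real.log X.card ≤ 3 * A.card / L := by
        gcongr
      push_cast
      linarith
    · calc _ ≤ q * energy43 X := hdrop X hXA hhalf
        _ ≤ q * (q ^ i * energy43 A) := by gcongr
        _ = _ := by ring

end

/-- **Lemma 7.** For finite `A, B ⊆ F∖{0}` with `|A| ≥ 3` and `B` nonempty, there is
`A₁ ⊆ A` with `|A₁| ≫ |A|` and `E*₄/₃(A₁') ≫ E*₄/₃(A₁)`, where `A₁'` is the popular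
subset of `A₁` relative to `B`. -/
theorem exists_subset_energy43_of_popular_subset :
    ∃ c : ℝ, 0 < c ∧ ∃ c' : ℝ, 0 < c' ∧
      ∀ (F : Type) [Field F] [DecidableEq F] (A B : Finset F),
        (0 : F) ∉ A → (0 : F) ∉ B → 3 ≤ A.card → B.Nonempty →
        ∃ A₁ ⊆ A, c * A.card ≤ (A₁.card : ℝ) ∧
          c' * energy43 A₁ ≤ energy43 (popularSub A₁ B) := by
  refine ⟨1 / 1000, by norm_num, Real.exp (-24), Real.exp_pos _, ?_⟩
  intro F _ _ A B hA0 _ hA3 hB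
  have hnpos : (0 : ℝ) < A.card := by exact_mod_cast (by omega : 0 < A.card)
  by_cases hsmall : A.card ≤ 1000
  · obtain ⟨a, ha⟩ := card_pos.1 (by omega : 0 < A.card)
    refine ⟨{a}, singleton_subset_iff.2 ha, ?_, ?_⟩
    · have : (A.card : ℝ) ≤ 1000 := by exact_mod_cast hsmall
      rw [card_singleton]; push_cast; linarith
    · rw [popularSub_singleton]
      have h0 : 0 ≤ energy43 ({a} : Finset F) := (sq_nonneg _).trans (sq_card_le_energy43 _)
      exact mul_le_of_le_one_left h0 (Real.exp_le_one_iff.2 (by norm_num))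
  by_contra! hcon
  have hbig : (1000 : ℝ) < A.card := by exact_mod_cast not_le.1 hsmall
  set L := Real.log (A.card / 2) with hL
  have hL6 : 6 ≤ L := by
    rw [hL, Real.le_log_iff_exp_le (by positivity)]
    have h1 : Real.exp 6 = Real.exp 1 ^ 6 := by rw [← Real.exp_nat_mul]; norm_num
    have h2 : Real.exp 1 ^ 6 ≤ 2.7182818286 ^ 6 := by
      gcongr; exact Real.exp_one_lt_d9.le
    rw [h1]
    refine h2.trans ?_
    norm_num
    linarith
  have hK : (⌊L / 6⌋₊ : ℝ) ≤ L / 6 := Nat.floor_le (by linarith)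
  -- As `L / 6 ≥ 1`, its integer part is at least half of it.
  have hK' : L / 12 ≤ (⌊L / 6⌋₊ : ℝ) := by
    have h1 : L / 6 < (⌊L / 6⌋₊ : ℝ) + 1 := Nat.lt_floor_add_one _
    have h2 : (1 : ℝ) ≤ (⌊L / 6⌋₊ : ℝ) := by
      exact_mod_cast Nat.le_floor (by push_cast; linarith : ((1 : ℕ) : ℝ) ≤ L / 6)
    linarith
  obtain ⟨X, hXA, hXc, hXE⟩ := exists_iterated_drop hB (Real.exp_pos (-24)).le hL6
    (fun X hX hXc => (hcon X hX (by linarith)).le) _ hK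
  rw [← hL] at hXc
  have hhalf : (A.card : ℝ) / 2 ≤ X.card := by
    have : (⌊L / 6⌋₊ : ℝ) * (3 * A.card / L) ≤ L / 6 * (3 * A.card / L) := by
      gcongr
    have h2 : L / 6 * (3 * A.card / L) = (A.card : ℝ) / 2 := by
      have : L ≠ 0 := by linarith
      field_simp; norm_num
    linarith
  -- The total drop is at least by a factor `exp (2 L) = (|A| / 2) ^ 2`.
  have hexp : Real.exp (-24) ^ ⌊L / 6⌋₊ ≤ ((A.card / 2 : ℝ) ^ 2)⁻¹ := by
    have h1 : (A.card / 2 : ℝ) = Real.exp L := (Real.exp_log (by positivity)).symm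
    rw [h1, ← Real.exp_nat_mul, ← Real.exp_nat_mul, ← Real.exp_neg, Real.exp_le_exp]
    push_cast
    linarith
  have hfin : ((A.card : ℝ) / 2) ^ 2 ≤ ((A.card / 2 : ℝ) ^ 2)⁻¹ * (A.card : ℝ) ^ 3 :=
    calc ((A.card : ℝ) / 2) ^ 2 ≤ (X.card : ℝ) ^ 2 := by gcongr
      _ ≤ energy43 X := sq_card_le_energy43 X
      _ ≤ _ := hXE
      _ ≤ _ := mul_le_mul hexp (energy43_le_card_pow_three hA0)
          ((sq_nonneg _).trans (sq_card_le_energy43 A)) (by positivity)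
  have h4 : ((A.card / 2 : ℝ) ^ 2)⁻¹ * (A.card : ℝ) ^ 3 = 4 * A.card := by
    field_simp; try norm_num
  rw [h4] at hfin
  nlinarith
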